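/- Let x ∈ W²_n, z₀ ∈ ℝ^q and θ ∈ int S, and let (x̂_i, ζ_i, ϑ_i) be a sequence with x̂_i ∈ PL(𝒫_i, ℝⁿ), ζ_i ∈ ℝ^q, ϑ_i ∈ S such that lim_{i→∞} (‖x̂_i − x‖_{W²} + |ζ_i − z₀| + |ϑ_i − θ|) = 0. Let ẑ_i ∈ PL(𝒫_i, ℝ^q) be the trapezoidally-discretized clean-state path associated with (x̂_i, ζ_i, ϑ_i), and let z ∈ W²_q be the unique solution of the initial value problem ż(t) = h(t, x(t), z(t), θ), z(0) = z₀. Then lim_{i→∞} ‖ẑ_i − z‖_∞ = 0. -/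

import Mathlib

open MeasureTheory Filter Set

/-!
Along the exact solution `z`, put `g s = h(s, x s, z s, θ)`, so that `z s = z₀ + ∫₀ˢ g`.
Convergence in `W²` implies uniform convergence `x̂ᵢ → x`, and as `(s, x s, z s, θ)` runs through a
compact curve, continuity of `h` makes the slopes `h(s, x̂ᵢ s, z s, ϑᵢ)` converge to `g` uniformly.
On a fine partition these slopes at the nodes are therefore within some small `η` of `g` on the
adjacent subintervals. With `e = ‖ẑᵢ - z‖`, the Lipschitz bound turns the trapezoidal rule into the
implicit recurrence `e(s) ≤ e(tₖ) + (s - tₖ) (L/2 (e(tₖ) + e(tₖ₊₁)) + η)` on `(tₖ, tₖ₊₁]`, and a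
discrete Grönwall inequality bounds `e` by a constant times `e(0) + η`.
-/

open scoped Topology NNReal

section UniformConvergence

variable {ι α β γ E : Type*} {l : Filter ι}

lemma tendstoUniformlyOn_prodMk [UniformSpace β] [UniformSpace γ] {F : ι → α → β} {f : α → β}
    {G : ι → α → γ} {g : α → γ} {s : Set α} (hF : TendstoUniformlyOn F f l s)
    (hG : TendstoUniformlyOn G g l s) :
    TendstoUniformlyOn (fun i a => (F i a, G i a)) (fun a => (f a, g a)) l s :=
  fun u hu => ((hF.prodMk hG) u hu).diag_of_prod

lemma tendstoUniformlyOn_refl [UniformSpace β] (f : α → β) (s : Set α) :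
    TendstoUniformlyOn (fun _ : ι => f) f l s :=
  fun _ hu => Eventually.of_forall fun _ _ _ => refl_mem_uniformity hu

lemma tendstoUniformlyOn_comp_of_isCompact [TopologicalSpace α] [UniformSpace β] [UniformSpace γ]
    {φ : β → γ} (hφ : Continuous φ) {F : ι → α → β} {f : α → β} {s : Set α} (hs : IsCompact s)
    (hf : ContinuousOn f s) (hF : TendstoUniformlyOn F f l s) :
    TendstoUniformlyOn (fun i a => φ (F i a)) (fun a => φ (f a)) l s := by
  intro u hu
  have hφ_near := (hs.image_of_continuousOn hf).uniformContinuousAt_of_continuousAt φ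
    (fun _ _ => hφ.continuousAt) hu
  filter_upwards [hF _ hφ_near] with i hi a ha
  exact hi a ha (mem_image_of_mem f ha)

lemma exists_forall_dist_le_norm_sub_le [PseudoMetricSpace α] [SeminormedAddCommGroup E]
    {F : ι → α → E} {f : α → E} {s : Set α} (hs : IsCompact s) (hf : ContinuousOn f s)
    (hF : TendstoUniformlyOn F f l s) {η : ℝ} (hη : 0 < η) :
    ∃ δ > 0, ∀ᶠ i in l, ∀ a ∈ s, ∀ c ∈ s, dist a c ≤ δ → ‖F i a - f c‖ ≤ η := by
  obtain ⟨δ, hδ, hfδ⟩ := Metric.uniformContinuousOn_iff_le.1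
    (hs.uniformContinuousOn_of_continuous hf) (η / 2) (half_pos hη)
  refine ⟨δ, hδ, ?_⟩
  filter_upwards [Metric.tendstoUniformlyOn_iff.1 hF (η / 2) (half_pos hη)] with i hi a ha c hc hac
  calc ‖F i a - f c‖ = dist (F i a) (f c) := (dist_eq_norm _ _).symm
    _ ≤ dist (F i a) (f a) + dist (f a) (f c) := dist_triangle _ _ _
    _ ≤ η / 2 + η / 2 := by
      rw [dist_comm (F i a)]
      exact add_le_add (hi a ha).le (hfδ a ha c hc hac)
    _ = η := add_halves η

lemma tendsto_iSup_norm_sub_of_tendstoUniformlyOn [SeminormedAddCommGroup E]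
    {F : ι → α → E} {f : α → E} {s : Set α} (hF : TendstoUniformlyOn F f l s) :
    Tendsto (fun i => ⨆ a : s, ‖F i a - f a‖) l (𝓝 0) := by
  rw [Metric.tendsto_nhds]
  intro ε hε
  filter_upwards [Metric.tendstoUniformlyOn_iff.1 hF (ε / 2) (half_pos hε)] with i hi
  have iSup_le_half : ⨆ a : s, ‖F i a - f a‖ ≤ ε / 2 :=
    Real.iSup_le (fun a => by rw [norm_sub_rev, ← dist_eq_norm]; exact (hi a a.2).le)
      (half_pos hε).le
  rw [Real.dist_0_eq_abs, abs_of_nonneg (Real.iSup_nonneg fun _ => norm_nonneg _)]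
  linarith

lemma tendsto_zero_and_of_tendsto_add_zero {u v : ι → ℝ} (hu : ∀ i, 0 ≤ u i) (hv : ∀ i, 0 ≤ v i)
    (huv : Tendsto (fun i => u i + v i) l (𝓝 0)) :
    Tendsto u l (𝓝 0) ∧ Tendsto v l (𝓝 0) :=
  ⟨squeeze_zero hu (fun i => le_add_of_nonneg_right (hv i)) huv,
    squeeze_zero hv (fun i => le_add_of_nonneg_left (hu i)) huv⟩

end UniformConvergence

section Sobolev

variable {E : Type*} [NormedAddCommGroup E]

lemma integral_norm_le_sqrt_measureReal_mul_sqrt {α : Type*} [MeasurableSpace α] {μ : Measure α}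
    [IsFiniteMeasure μ] {g : α → E} (hg : MemLp g 2 μ) :
    ∫ s, ‖g s‖ ∂μ ≤ √(μ.real univ) * √(∫ s, ‖g s‖ ^ 2 ∂μ) := by
  have holder := integral_mul_le_Lp_mul_Lq_of_nonneg (μ := μ) Real.HolderConjugate.two_two
    (f := fun _ => (1 : ℝ)) (g := fun s => ‖g s‖) (Eventually.of_forall fun _ => zero_le_one)
    (Eventually.of_forall fun _ => norm_nonneg _) (memLp_const 1) (by simpa using hg.norm)
  simpa [Real.sqrt_eq_rpow] using holder

/-- The `W²` norm on `[a, b]` of the absolutely continuous function with value `v` at `a` and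
almost everywhere derivative `g`. It has its intended value only if `g` is square integrable. -/
noncomputable def w2Norm (a b : ℝ) (v : E) (g : ℝ → E) : ℝ :=
  √(‖v‖ ^ 2 + ∫ s in Ioc a b, ‖g s‖ ^ 2)

variable [NormedSpace ℝ E] {a b : ℝ}

lemma norm_add_setIntegral_le_mul_w2Norm (v : E) {g : ℝ → E}
    (hg : MemLp g 2 (volume.restrict (Ioc a b))) {t : ℝ} (ht : t ∈ Icc a b) :
    ‖v + ∫ s in Ioc a t, g s‖ ≤ (1 + √(b - a)) * w2Norm a b v g := by
  have sq_integral_nonneg : 0 ≤ ∫ s in Ioc a b, ‖g s‖ ^ 2 := integral_nonneg fun _ => sq_nonneg _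
  have initial_le : ‖v‖ ≤ w2Norm a b v g :=
    Real.le_sqrt_of_sq_le (le_add_of_nonneg_right sq_integral_nonneg)
  have integral_le : ‖∫ s in Ioc a t, g s‖ ≤ √(b - a) * w2Norm a b v g :=
    calc ‖∫ s in Ioc a t, g s‖ ≤ ∫ s in Ioc a t, ‖g s‖ := norm_integral_le_integral_norm _
      _ ≤ ∫ s in Ioc a b, ‖g s‖ :=
        setIntegral_mono_set (hg.integrable one_le_two).norm
          (Eventually.of_forall fun _ => norm_nonneg _)
          (Ioc_subset_Ioc_right ht.2).eventuallyLE
      _ ≤ √(b - a) * √(∫ s in Ioc a b, ‖g s‖ ^ 2) := by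
        simpa [ht.1.trans ht.2] using integral_norm_le_sqrt_measureReal_mul_sqrt hg
      _ ≤ √(b - a) * w2Norm a b v g := by
        unfold w2Norm
        gcongr
        exact le_add_of_nonneg_left (sq_nonneg _)
  calc ‖v + ∫ s in Ioc a t, g s‖ ≤ ‖v‖ + ‖∫ s in Ioc a t, g s‖ := norm_add_le _ _
    _ ≤ w2Norm a b v g + √(b - a) * w2Norm a b v g := add_le_add initial_le integral_le
    _ = (1 + √(b - a)) * w2Norm a b v g := by ring

lemma tendstoUniformlyOn_of_tendsto_w2Norm {ι : Type*} {l : Filter ι} {x x' : ℝ → E}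
    {y y' : ι → ℝ → E} (hx' : MemLp x' 2 (volume.restrict (Ioc a b)))
    (hy' : ∀ i, MemLp (y' i) 2 (volume.restrict (Ioc a b)))
    (hx : ∀ t ∈ Icc a b, x t = x a + ∫ s in Ioc a t, x' s)
    (hy : ∀ i, ∀ t ∈ Icc a b, y i t = y i a + ∫ s in Ioc a t, y' i s)
    (hyx : Tendsto (fun i => w2Norm a b (y i a - x a) (fun s => y' i s - x' s)) l (𝓝 0)) :
    TendstoUniformlyOn y x l (Icc a b) := by
  have dist_le : ∀ i, ∀ t ∈ Icc a b,
      dist (x t) (y i t) ≤ (1 + √(b - a)) * w2Norm a b (y i a - x a) (fun s => y' i s - x' s) := by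
    intro i t ht
    have integrableOn_of_memLp {g : ℝ → E} (hg : MemLp g 2 (volume.restrict (Ioc a b))) :
        IntegrableOn g (Ioc a t) :=
      (hg.integrable one_le_two).mono_measure
        (Measure.restrict_mono_set _ (Ioc_subset_Ioc_right ht.2))
    have sub_eq : y i t - x t = (y i a - x a) + ∫ s in Ioc a t, (y' i s - x' s) := by
      rw [integral_sub (integrableOn_of_memLp (hy' i)) (integrableOn_of_memLp hx'), hy i t ht,
        hx t ht]
      abel
    rw [dist_comm, dist_eq_norm, sub_eq]
    exact norm_add_setIntegral_le_mul_w2Norm _ ((hy' i).sub hx') ht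
  rw [Metric.tendstoUniformlyOn_iff]
  intro ε hε
  have bound_tendsto := hyx.const_mul (1 + √(b - a))
  rw [mul_zero] at bound_tendsto
  filter_upwards [bound_tendsto.eventually_lt_const hε] with i hi t ht
  exact (dist_le i t ht).trans_lt hi

end Sobolev

/-- `t 0 < ⋯ < t N` are the nodes of a partition of `[a, b]`; the values of `t` beyond the index
`N` are irrelevant. -/
structure IsPartition (N : ℕ) (t : ℕ → ℝ) (a b : ℝ) : Prop where
  map_zero : t 0 = a
  map_last : t N = b
  lt_succ : ∀ k < N, t k < t (k + 1)

/-- The mesh of the partition with nodes `t 0, …, t N`, that is, its largest step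
(`0` if `N = 0`). -/
noncomputable def mesh (N : ℕ) (t : ℕ → ℝ) : ℝ :=
  ⨆ k : Fin N, (t (k.1 + 1) - t k.1)

lemma sub_le_mesh {N : ℕ} (t : ℕ → ℝ) {k : ℕ} (hk : k < N) : t (k + 1) - t k ≤ mesh N t :=
  le_ciSup (f := fun k : Fin N => t (k.1 + 1) - t k.1) (finite_range _).bddAbove ⟨k, hk⟩

lemma explicit_step_of_implicit_step {e₀ e₁ δ L η : ℝ} (he₀ : 0 ≤ e₀) (hη : 0 ≤ η) (hδ : 0 ≤ δ)
    (hL : 0 ≤ L) (hLδ : L * δ ≤ 1) (h : e₁ ≤ e₀ + δ * (L / 2 * (e₀ + e₁) + η)) :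
    e₁ ≤ (1 + 2 * L * δ) * e₀ + 2 * η * δ := by
  have coeff_le : 1 + L * δ / 2 ≤ (1 - L * δ / 2) * (1 + 2 * L * δ) := by
    nlinarith [mul_nonneg (mul_nonneg hL hδ) (sub_nonneg.2 hLδ)]
  have one_le : 1 ≤ (1 - L * δ / 2) * 2 := by linarith
  have : 0 ≤ η * δ := mul_nonneg hη hδ
  have multiplied : (1 - L * δ / 2) * e₁ ≤
      (1 - L * δ / 2) * ((1 + 2 * L * δ) * e₀ + 2 * η * δ) :=
    calc (1 - L * δ / 2) * e₁ ≤ (1 + L * δ / 2) * e₀ + 1 * (η * δ) := by linarith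
      _ ≤ (1 - L * δ / 2) * (1 + 2 * L * δ) * e₀ + (1 - L * δ / 2) * 2 * (η * δ) := by gcongr
      _ = (1 - L * δ / 2) * ((1 + 2 * L * δ) * e₀ + 2 * η * δ) := by ring
  exact le_of_mul_le_mul_left multiplied (by linarith)

namespace IsPartition

variable {N : ℕ} {t : ℕ → ℝ} {a b : ℝ}

lemma monotoneOn (hP : IsPartition N t a b) : MonotoneOn t (Iic N) :=
  monotoneOn_of_le_add_one ordConnected_Iic fun k _ _ hk =>
    (hP.lt_succ k (Nat.lt_of_succ_le hk)).le

lemma mem_Icc (hP : IsPartition N t a b) {k : ℕ} (hk : k ≤ N) : t k ∈ Icc a b := by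
  rw [← hP.map_zero, ← hP.map_last]
  exact ⟨hP.monotoneOn (Nat.zero_le N) hk (Nat.zero_le k), hP.monotoneOn hk self_mem_Iic hk⟩

lemma le (hP : IsPartition N t a b) : a ≤ b :=
  (hP.mem_Icc le_rfl).1.trans (hP.mem_Icc le_rfl).2

lemma init (hP : IsPartition N t a b) {k : ℕ} (hk : k ≤ N) : IsPartition k t a (t k) :=
  ⟨hP.map_zero, rfl, fun j hj => hP.lt_succ j (hj.trans_le hk)⟩

lemma exists_mem_Ioc (hP : IsPartition N t a b) {s : ℝ} (hs : s ∈ Ioc a b) :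
    ∃ k < N, s ∈ Ioc (t k) (t (k + 1)) := by
  induction N generalizing b with
  | zero =>
    rw [← hP.map_zero, ← hP.map_last] at hs
    exact absurd (hs.1.trans_le hs.2) (lt_irrefl _)
  | succ N ih =>
    rcases le_or_gt s (t N) with hsN | hNs
    · obtain ⟨k, hk, hks⟩ := ih (hP.init N.le_succ) ⟨hs.1, hsN⟩
      exact ⟨k, hk.trans N.lt_succ_self, hks⟩
    · exact ⟨N, N.lt_succ_self, hNs, hP.map_last ▸ hs.2⟩

lemma integrableOn_comp_of_piecewise_const {α G : Type*} [NormedAddCommGroup G]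
    (hP : IsPartition N t a b) {d : ℝ → α}
    (hd : ∀ k < N, ∃ c, ∀ s ∈ Ico (t k) (t (k + 1)), d s = c) (φ : α → G) :
    IntegrableOn (fun s => φ (d s)) (Ico a b) := by
  induction N generalizing b with
  | zero => simp [← hP.map_zero, ← hP.map_last]
  | succ N ih =>
    have hN := hP.lt_succ N N.lt_succ_self
    obtain ⟨c, hc⟩ := hd N N.lt_succ_self
    rw [← hP.map_last, ← Ico_union_Ico_eq_Ico (hP.mem_Icc N.le_succ).1 hN.le]
    refine (ih (hP.init N.le_succ) fun k hk => hd k (hk.trans N.lt_succ_self)).union ?_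
    exact (integrableOn_const (C := φ c) (by simp)).congr_fun (fun s hs => by rw [hc s hs])
      measurableSet_Ico

lemma memLp_two_of_piecewise_const {E : Type*} [NormedAddCommGroup E]
    (hP : IsPartition N t a b) {d : ℝ → E}
    (hd : ∀ k < N, ∃ c, ∀ s ∈ Ico (t k) (t (k + 1)), d s = c) :
    MemLp d 2 (volume.restrict (Ioc a b)) := by
  rw [← restrict_Ico_eq_restrict_Ioc]
  exact (memLp_two_iff_integrable_sq_norm
    (hP.integrableOn_comp_of_piecewise_const hd id).aestronglyMeasurable).2
    (hP.integrableOn_comp_of_piecewise_const hd fun v => ‖v‖ ^ 2)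

lemma discrete_gronwall (hP : IsPartition N t a b) {e : ℕ → ℝ} {C η : ℝ} (hC : 0 ≤ C)
    (hη : 0 ≤ η) (he : 0 ≤ e 0)
    (hstep : ∀ k < N, e (k + 1) ≤ (1 + C * (t (k + 1) - t k)) * e k + η * (t (k + 1) - t k)) :
    e N ≤ (e 0 + η * (b - a)) * Real.exp (C * (b - a)) := by
  -- The library inequality wants a recurrence at all indices, so both sequences are held
  -- constant after `N`.
  set δ : ℕ → ℝ := fun k => t (min (k + 1) N) - t (min k N) with hδ
  have δ_nonneg (k : ℕ) : 0 ≤ δ k :=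
    sub_nonneg.2 (hP.monotoneOn (mem_Iic.2 (min_le_right _ _)) (mem_Iic.2 (min_le_right _ _))
      (min_le_min_right N k.le_succ))
  have sum_δ : ∑ k ∈ Finset.range N, δ k = b - a := by
    rw [Finset.sum_range_sub fun k => t (min k N)]
    simp [hP.map_zero, hP.map_last]
  have truncated_step (k : ℕ) (_ : k ≥ 0) :
      e (min (k + 1) N) ≤ (1 + C * δ k) * e (min k N) + η * δ k := by
    rcases lt_or_ge k N with hk | hk
    · simpa [hδ, hk.le, Nat.succ_le_of_lt hk] using hstep k hk
    · simp [hδ, hk, hk.trans k.le_succ]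
  simpa [← Finset.mul_sum, sum_δ] using _root_.discrete_gronwall (u := fun k => e (min k N))
    (by simpa using he) truncated_step (fun k _ => mul_nonneg hC (δ_nonneg k))
    (fun k _ => mul_nonneg hη (δ_nonneg k)) N.zero_le

lemma implicit_gronwall_node (hP : IsPartition N t a b) {e : ℝ → ℝ} (he : ∀ s, 0 ≤ e s)
    {L δ η : ℝ} (hL : 0 ≤ L) (hη : 0 ≤ η) (hLδ : L * δ ≤ 1) (hδ : ∀ k < N, t (k + 1) - t k ≤ δ)
    (hstep : ∀ k < N, ∀ s ∈ Ioc (t k) (t (k + 1)),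
      e s ≤ e (t k) + (s - t k) * (L / 2 * (e (t k) + e (t (k + 1))) + η))
    {k : ℕ} (hk : k ≤ N) :
    e (t k) ≤ (e a + 2 * η * (b - a)) * Real.exp (2 * L * (b - a)) := by
  have explicit_step (j : ℕ) (hj : j < k) : e (t (j + 1)) ≤
      (1 + 2 * L * (t (j + 1) - t j)) * e (t j) + 2 * η * (t (j + 1) - t j) := by
    have hjN := hj.trans_le hk
    have hj_lt := hP.lt_succ j hjN
    exact explicit_step_of_implicit_step (he _) hη (sub_nonneg.2 hj_lt.le) hL
      ((mul_le_mul_of_nonneg_left (hδ j hjN) hL).trans hLδ) (hstep j hjN _ ⟨hj_lt, le_rfl⟩)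
  have htk := hP.mem_Icc hk
  calc e (t k) ≤ (e (t 0) + 2 * η * (t k - a)) * Real.exp (2 * L * (t k - a)) :=
        (hP.init hk).discrete_gronwall (e := fun j => e (t j)) (by positivity) (by positivity)
          (he _) explicit_step
    _ ≤ (e a + 2 * η * (b - a)) * Real.exp (2 * L * (b - a)) := by
      rw [hP.map_zero]
      have := he a
      have := sub_nonneg.2 hP.le
      gcongr
      exacts [htk.2, htk.2]

lemma implicit_gronwall (hP : IsPartition N t a b) {e : ℝ → ℝ} (he : ∀ s, 0 ≤ e s)
    {L δ η : ℝ} (hL : 0 ≤ L) (hη : 0 ≤ η) (hLδ : L * δ ≤ 1) (hδ : ∀ k < N, t (k + 1) - t k ≤ δ)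
    (hstep : ∀ k < N, ∀ s ∈ Ioc (t k) (t (k + 1)),
      e s ≤ e (t k) + (s - t k) * (L / 2 * (e (t k) + e (t (k + 1))) + η))
    {s : ℝ} (hs : s ∈ Icc a b) :
    e s ≤ 3 * ((e a + 2 * η * (b - a)) * Real.exp (2 * L * (b - a))) := by
  set M := (e a + 2 * η * (b - a)) * Real.exp (2 * L * (b - a))
  have node_le {k : ℕ} (hk : k ≤ N) : e (t k) ≤ M :=
    hP.implicit_gronwall_node he hL hη hLδ hδ hstep hk
  have hab : 0 ≤ η * (b - a) := mul_nonneg hη (sub_nonneg.2 hP.le)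
  have defect_le : η * (b - a) ≤ M := by
    have one_le_exp : 1 ≤ Real.exp (2 * L * (b - a)) :=
      Real.one_le_exp (mul_nonneg (by positivity) (sub_nonneg.2 hP.le))
    nlinarith [he a]
  rcases eq_or_lt_of_le hs.1 with rfl | has
  · have := node_le N.zero_le
    rw [hP.map_zero] at this
    linarith
  · obtain ⟨k, hk, hks⟩ := hP.exists_mem_Ioc ⟨has, hs.2⟩
    have hM_nonneg : 0 ≤ M := hab.trans defect_le
    have sub_le_step : s - t k ≤ δ := by linarith [hδ k hk, hks.2]
    calc e s ≤ e (t k) + (s - t k) * (L / 2 * (e (t k) + e (t (k + 1))) + η) := hstep k hk s hks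
      _ ≤ M + (s - t k) * (L / 2 * (M + M) + η) := by
        have := sub_nonneg.2 hks.1.le
        gcongr
        exacts [node_le hk.le, node_le hk.le, node_le hk]
      _ = M + (L * (s - t k)) * M + η * (s - t k) := by ring
      _ ≤ M + 1 * M + η * (b - a) := by
        gcongr
        exacts [(mul_le_mul_of_nonneg_left sub_le_step hL).trans hLδ, hs.2,
          (hP.mem_Icc hk.le).1]
      _ ≤ 3 * M := by linarith

end IsPartition

lemma norm_trapezoid_sub_integral_le {F : Type*} [NormedAddCommGroup F] [NormedSpace ℝ F]
    [CompleteSpace F] {c s A B : ℝ} (hcs : c ≤ s) {p r : F} {g : ℝ → F}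
    (hg : IntervalIntegrable g volume c s) (hp : ∀ u ∈ Ioc c s, ‖p - g u‖ ≤ A)
    (hr : ∀ u ∈ Ioc c s, ‖r - g u‖ ≤ B) :
    ‖((s - c) / 2) • (p + r) - ∫ u in c..s, g u‖ ≤ (s - c) * ((A + B) / 2) := by
  have as_integral : ((s - c) / 2) • (p + r) - ∫ u in c..s, g u =
      ∫ u in c..s, ((1 / 2 : ℝ) • (p + r) - g u) := by
    rw [intervalIntegral.integral_sub intervalIntegrable_const hg,
      intervalIntegral.integral_const]
    module
  have integrand_le (u : ℝ) (hu : u ∈ Ioc c s) : ‖(1 / 2 : ℝ) • (p + r) - g u‖ ≤ (A + B) / 2 :=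
    calc ‖(1 / 2 : ℝ) • (p + r) - g u‖ = ‖(1 / 2 : ℝ) • ((p - g u) + (r - g u))‖ := by
          congr 1; module
      _ = 1 / 2 * ‖(p - g u) + (r - g u)‖ := by
          rw [norm_smul, Real.norm_of_nonneg one_half_pos.le]
      _ ≤ 1 / 2 * (A + B) := by
          gcongr
          exact norm_add_le_of_le (hp u hu) (hr u hu)
      _ = (A + B) / 2 := by ring
  rw [as_integral, mul_comm, ← abs_of_nonneg (sub_nonneg.2 hcs)]
  exact intervalIntegral.norm_integral_le_of_norm_le_const fun u hu =>
    integrand_le u (uIoc_of_le hcs ▸ hu)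

section Trapezoidal

variable {F : Type*} [NormedAddCommGroup F] [NormedSpace ℝ F]

/-- `w` is produced by the implicit trapezoidal rule for `ẇ = f(s, w)` on the partition with nodes
`t 0, …, t N`, and is affine between consecutive nodes. -/
def IsTrapezoidalPath (N : ℕ) (t : ℕ → ℝ) (f : ℝ → F → F) (w : ℝ → F) : Prop :=
  ∀ k < N, ∀ s ∈ Ioc (t k) (t (k + 1)), w s = w (t k) + ((s - t k) / 2) •
    (f (t k) (w (t k)) + f (t (k + 1)) (w (t (k + 1))))

namespace IsTrapezoidalPath

variable [CompleteSpace F] {a b : ℝ} {L : ℝ≥0} {g z : ℝ → F}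

section ErrorBound

variable {N : ℕ} {t : ℕ → ℝ} {f : ℝ → F → F} {w : ℝ → F} {δ η : ℝ}

lemma norm_sub_step_le (hw : IsTrapezoidalPath N t f w) (hP : IsPartition N t a b)
    (hf : ∀ s ∈ Icc a b, LipschitzWith L (f s)) (hg : ContinuousOn g (Icc a b))
    (hz : ∀ s ∈ Icc a b, z s = z a + ∫ u in a..s, g u) (hδ : ∀ k < N, t (k + 1) - t k ≤ δ)
    (hdefect : ∀ r ∈ Icc a b, ∀ u ∈ Icc a b, dist r u ≤ δ → ‖f r (z r) - g u‖ ≤ η)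
    {k : ℕ} (hk : k < N) {s : ℝ} (hs : s ∈ Ioc (t k) (t (k + 1))) :
    ‖w s - z s‖ ≤ ‖w (t k) - z (t k)‖ + (s - t k) *
      (L / 2 * (‖w (t k) - z (t k)‖ + ‖w (t (k + 1)) - z (t (k + 1))‖) + η) := by
  have htk := hP.mem_Icc hk.le
  have htk' := hP.mem_Icc (Nat.succ_le_of_lt hk)
  have hs_mem : s ∈ Icc a b := ⟨htk.1.trans hs.1.le, hs.2.trans htk'.2⟩
  have integrable_of_mem {c d : ℝ} (hc : c ∈ Icc a b) (hd : d ∈ Icc a b) :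
      IntervalIntegrable g volume c d :=
    (hg.mono (ordConnected_Icc.uIcc_subset hc hd)).intervalIntegrable
  have z_increment : z s = z (t k) + ∫ u in t k..s, g u := by
    have ha : a ∈ Icc a b := left_mem_Icc.2 hP.le
    rw [hz s hs_mem, hz _ htk, add_assoc, intervalIntegral.integral_add_adjacent_intervals
      (integrable_of_mem ha htk) (integrable_of_mem htk hs_mem)]
  have node_slope_sub_le {r u : ℝ} (hr : r ∈ Icc (t k) (t (k + 1))) (hu : u ∈ Ioc (t k) s) :
      ‖f r (w r) - g u‖ ≤ L * ‖w r - z r‖ + η := by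
    have hr_mem : r ∈ Icc a b := Icc_subset_Icc htk.1 htk'.2 hr
    have hu_mem : u ∈ Icc a b := ⟨htk.1.trans hu.1.le, hu.2.trans hs_mem.2⟩
    have hru : dist r u ≤ δ :=
      (Real.dist_le_of_mem_Icc hr ⟨hu.1.le, hu.2.trans hs.2⟩).trans (hδ k hk)
    calc ‖f r (w r) - g u‖ ≤ ‖f r (w r) - f r (z r)‖ + ‖f r (z r) - g u‖ :=
          norm_sub_le_norm_sub_add_norm_sub _ _ _
      _ ≤ L * ‖w r - z r‖ + η :=
          add_le_add ((hf r hr_mem).norm_sub_le _ _) (hdefect r hr_mem u hu_mem hru)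
  have hstep_le := (hs.1.trans_le hs.2).le
  have trapezoid_le := norm_trapezoid_sub_integral_le hs.1.le (integrable_of_mem htk hs_mem)
    (fun u hu => node_slope_sub_le (left_mem_Icc.2 hstep_le) hu)
    (fun u hu => node_slope_sub_le (right_mem_Icc.2 hstep_le) hu)
  rw [hw k hk s hs, z_increment, add_sub_add_comm]
  exact norm_add_le_of_le le_rfl (trapezoid_le.trans_eq (by ring))

theorem norm_sub_le (hw : IsTrapezoidalPath N t f w) (hP : IsPartition N t a b)
    (hf : ∀ s ∈ Icc a b, LipschitzWith L (f s)) (hg : ContinuousOn g (Icc a b))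
    (hz : ∀ s ∈ Icc a b, z s = z a + ∫ u in a..s, g u) (hδ : ∀ k < N, t (k + 1) - t k ≤ δ)
    (hLδ : L * δ ≤ 1) (hη : 0 ≤ η)
    (hdefect : ∀ r ∈ Icc a b, ∀ u ∈ Icc a b, dist r u ≤ δ → ‖f r (z r) - g u‖ ≤ η)
    {s : ℝ} (hs : s ∈ Icc a b) :
    ‖w s - z s‖ ≤ 3 * ((‖w a - z a‖ + 2 * η * (b - a)) * Real.exp (2 * L * (b - a))) :=
  hP.implicit_gronwall (e := fun r => ‖w r - z r‖) (fun _ => norm_nonneg _) L.2 hη hLδ hδ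
    (fun _ hk _ hr => hw.norm_sub_step_le hP hf hg hz hδ hdefect hk hr) hs

end ErrorBound

theorem tendstoUniformlyOn {ι : Type*} {l : Filter ι} {N : ι → ℕ} {t : ι → ℕ → ℝ}
    {f : ι → ℝ → F → F} {w : ι → ℝ → F}
    (hw : ∀ i, IsTrapezoidalPath (N i) (t i) (f i) (w i))
    (hP : ∀ i, IsPartition (N i) (t i) a b) (hmesh : Tendsto (fun i => mesh (N i) (t i)) l (𝓝 0))
    (hf : ∀ i, ∀ s ∈ Icc a b, LipschitzWith L (f i s)) (hg : ContinuousOn g (Icc a b))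
    (hz : ∀ s ∈ Icc a b, z s = z a + ∫ u in a..s, g u)
    (hfg : TendstoUniformlyOn (fun i s => f i s (z s)) g l (Icc a b))
    (hwa : Tendsto (fun i => w i a) l (𝓝 (z a))) :
    TendstoUniformlyOn w z l (Icc a b) := by
  rw [Metric.tendstoUniformlyOn_iff]
  intro ε hε
  set K := 3 * ((1 + 2 * |b - a|) * Real.exp (2 * L * (b - a)))
  obtain ⟨η, hη, hKη⟩ : ∃ η > 0, K * η < ε := exists_pos_mul_lt hε K
  obtain ⟨δ, hδ, hdefect⟩ := exists_forall_dist_le_norm_sub_le isCompact_Icc hg hfg hη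
  obtain ⟨δ', hδ', hLδ'⟩ : ∃ δ' > 0, (L : ℝ) * δ' < 1 := exists_pos_mul_lt one_pos _
  filter_upwards [hdefect, hmesh.eventually_lt_const (lt_min hδ hδ'),
    Metric.tendsto_nhds.1 hwa η hη] with i defect_le mesh_lt initial_lt s hs
  have hLδ : L * min δ δ' ≤ 1 :=
    (mul_le_mul_of_nonneg_left (min_le_right δ δ') L.2).trans hLδ'.le
  rw [dist_eq_norm] at initial_lt
  rw [dist_comm, dist_eq_norm]
  calc ‖w i s - z s‖
      ≤ 3 * ((‖w i a - z a‖ + 2 * η * (b - a)) * Real.exp (2 * L * (b - a))) :=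
        (hw i).norm_sub_le (hP i) (hf i) hg hz
          (fun k hk => (sub_le_mesh (t i) hk).trans mesh_lt.le) hLδ hη.le
          (fun r hr u hu hru => defect_le r hr u hu (hru.trans (min_le_left _ _))) hs
    _ ≤ 3 * ((η + 2 * η * |b - a|) * Real.exp (2 * L * (b - a))) := by
        gcongr
        exact le_abs_self _
    _ = K * η := by ring
    _ < ε := hKη

end IsTrapezoidalPath

end Trapezoidal

theorem stmt12_general {ι E F P : Type*} [UniformSpace E] [NormedAddCommGroup F] [NormedSpace ℝ F]
    [CompleteSpace F] [UniformSpace P] {l : Filter ι} {a b : ℝ} {N : ι → ℕ} {t : ι → ℕ → ℝ}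
    (hP : ∀ i, IsPartition (N i) (t i) a b) (hmesh : Tendsto (fun i => mesh (N i) (t i)) l (𝓝 0))
    {h : ℝ → E → F → P → F} (hh : Continuous fun p : ℝ × E × F × P => h p.1 p.2.1 p.2.2.1 p.2.2.2)
    {x : ℝ → E} {xh : ι → ℝ → E} (hx : ContinuousOn x (Icc a b))
    (hxh : TendstoUniformlyOn xh x l (Icc a b))
    {θ : P} {ϑ : ι → P} (hϑ : Tendsto ϑ l (𝓝 θ)) {L : ℝ≥0}
    (hL : ∀ i, ∀ s ∈ Icc a b, LipschitzWith L fun w => h s (xh i s) w (ϑ i))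
    {zh : ι → ℝ → F}
    (hzh : ∀ i, IsTrapezoidalPath (N i) (t i) (fun s w => h s (xh i s) w (ϑ i)) (zh i))
    {z₀ : F} (hzha : Tendsto (fun i => zh i a) l (𝓝 z₀))
    {z : ℝ → F} (hzc : ContinuousOn z (Icc a b))
    (hz : ∀ s ∈ Icc a b, z s = z₀ + ∫ u in Ioc a s, h u (x u) (z u) θ) :
    TendstoUniformlyOn zh z l (Icc a b) := by
  rcases (Icc a b).eq_empty_or_nonempty with hab | hab
  · rw [hab]
    exact tendstoUniformlyOn_empty
  have hza : z a = z₀ := by simpa using hz a (left_mem_Icc.2 (nonempty_Icc.1 hab))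
  have hpath : ContinuousOn (fun s => (s, x s, z s, θ)) (Icc a b) :=
    continuousOn_id.prodMk (hx.prodMk (hzc.prodMk continuousOn_const))
  have paths_tendsto : TendstoUniformlyOn (fun i s => (s, xh i s, z s, ϑ i))
      (fun s => (s, x s, z s, θ)) l (Icc a b) :=
    tendstoUniformlyOn_prodMk (tendstoUniformlyOn_refl _ _) <|
      tendstoUniformlyOn_prodMk hxh <|
        tendstoUniformlyOn_prodMk (tendstoUniformlyOn_refl _ _)
          (hϑ.tendstoUniformlyOn_const _)
  refine IsTrapezoidalPath.tendstoUniformlyOn hzh hP hmesh hL (hh.comp_continuousOn hpath) ?_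
    (tendstoUniformlyOn_comp_of_isCompact hh isCompact_Icc hpath paths_tendsto) (hza ▸ hzha)
  intro s hs
  rw [hza, intervalIntegral.integral_of_le hs.1]
  exact hz s hs

/-- convergence of trapezoidally-discretized clean-state paths: if
`(x̂_i, ζ_i, ϑ_i) → (x, z₀, θ)` with `θ ∈ int S` and `ϑ_i ∈ S`, the associated
trapezoidally-discretized clean-state paths `ẑ_i` converge, in supremum norm, to the
unique solution `z` of `ż = h(t, x, z, θ)`, `z(0) = z₀`. Piecewise linear
`x̂_i ∈ PL(𝒫_i)` are encoded by their piecewise constant derivatives `d i`; the `W²`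
function `x` by the pair `(x, x')`. -/
theorem stmt12 {n q m : ℕ} (tf : ℝ) (htf : 0 < tf)
    (N : ℕ → ℕ) (hN1 : ∀ i, 1 ≤ N i) (tP : ℕ → ℕ → ℝ)
    (htP0 : ∀ i, tP i 0 = 0) (htPN : ∀ i, tP i (N i) = tf)
    (htPmono : ∀ i, ∀ k < N i, tP i k < tP i (k + 1))
    (hnested : ∀ i, ∀ k ≤ N i, ∃ k' ≤ N (i + 1), tP (i + 1) k' = tP i k)
    (hmesh : Tendsto (fun i => ⨆ k : Fin (N i), (tP i (k.1 + 1) - tP i k.1))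
      atTop (nhds 0))
    (S : Set (EuclideanSpace ℝ (Fin m)))
    (h : ℝ → EuclideanSpace ℝ (Fin n) → EuclideanSpace ℝ (Fin q) →
      EuclideanSpace ℝ (Fin m) → EuclideanSpace ℝ (Fin q))
    (hhc : Continuous fun p : ℝ × EuclideanSpace ℝ (Fin n) × EuclideanSpace ℝ (Fin q) ×
      EuclideanSpace ℝ (Fin m) => h p.1 p.2.1 p.2.2.1 p.2.2.2)
    (ρh : ℝ → ℝ) (hρh : Tendsto ρh (nhdsWithin 0 (Ioi 0)) (nhds 0))
    (hhu : ∀ ε > (0:ℝ), ∀ t ∈ Icc (0:ℝ) tf, ∀ t' ∈ Icc (0:ℝ) tf,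
      ∀ (a a' : EuclideanSpace ℝ (Fin n)) (b b' : EuclideanSpace ℝ (Fin q))
        (c c' : EuclideanSpace ℝ (Fin m)), c ∈ S → c' ∈ S →
      |t - t'| ≤ ε → ‖a - a'‖ ≤ ε → ‖b - b'‖ ≤ ε → ‖c - c'‖ ≤ ε →
      ‖h t a b c - h t' a' b' c'‖ ≤ ρh ε)
    (Lf Lh : ℝ) (hLf : 0 < Lf) (hLh : 0 < Lh)
    (hhLip : ∀ θ' ∈ S, ∀ t ∈ Icc (0:ℝ) tf,
      ∀ (a a' : EuclideanSpace ℝ (Fin n)) (b b' : EuclideanSpace ℝ (Fin q)),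
      ‖h t a b θ' - h t a' b' θ'‖ ≤ Lh * (‖a - a'‖ + ‖b - b'‖))
    (hmeshLip : ∀ i, ∀ k < N i, (Lf + Lh) * (tP i (k + 1) - tP i k) < 2)
    -- the limit point
    (x x' : ℝ → EuclideanSpace ℝ (Fin n))
    (hInt : IntegrableOn x' (Icc 0 tf))
    (hL2 : IntegrableOn (fun t => ‖x' t‖ ^ 2) (Icc 0 tf))
    (hAC : ∀ t ∈ Icc (0:ℝ) tf, x t = x 0 + ∫ s in Ioc (0:ℝ) t, x' s)
    (z0 : EuclideanSpace ℝ (Fin q))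
    (θ : EuclideanSpace ℝ (Fin m)) (hθ : θ ∈ interior S)
    -- the approximating sequence
    (xh d : ℕ → ℝ → EuclideanSpace ℝ (Fin n))
    (hdpc : ∀ i, ∀ k < N i, ∃ b : EuclideanSpace ℝ (Fin n),
      ∀ s ∈ Ico (tP i k) (tP i (k + 1)), d i s = b)
    (hxhAC : ∀ i, ∀ s ∈ Icc (0:ℝ) tf, xh i s = xh i 0 + ∫ u in Ioc (0:ℝ) s, d i u)
    (ζ : ℕ → EuclideanSpace ℝ (Fin q)) (ϑ : ℕ → EuclideanSpace ℝ (Fin m))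
    (hϑS : ∀ i, ϑ i ∈ S)
    (hconv : Tendsto (fun i =>
      Real.sqrt (‖xh i 0 - x 0‖ ^ 2 + ∫ s in Ioc (0:ℝ) tf, ‖d i s - x' s‖ ^ 2)
      + ‖ζ i - z0‖ + ‖ϑ i - θ‖) atTop (nhds 0))
    -- the trapezoidally-discretized clean-state paths
    (zh : ℕ → ℝ → EuclideanSpace ℝ (Fin q))
    (hzh0 : ∀ i, zh i 0 = ζ i)
    (hzhrec : ∀ i, ∀ k < N i, ∀ s ∈ Ioc (tP i k) (tP i (k + 1)),
      zh i s = zh i (tP i k) + ((s - tP i k) / 2) •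
        (h (tP i k) (xh i (tP i k)) (zh i (tP i k)) (ϑ i) +
         h (tP i (k + 1)) (xh i (tP i (k + 1))) (zh i (tP i (k + 1))) (ϑ i)))
    -- the limit clean-state path: solution of the IVP
    (z : ℝ → EuclideanSpace ℝ (Fin q)) (hzc : ContinuousOn z (Icc 0 tf))
    (hz : ∀ t ∈ Icc (0:ℝ) tf, z t = z0 + ∫ s in Ioc (0:ℝ) t, h s (x s) (z s) θ) :
    Tendsto (fun i => ⨆ t : Icc (0:ℝ) tf, ‖zh i t.1 - z t.1‖) atTop (nhds 0) := by
  have hP (i : ℕ) : IsPartition (N i) (tP i) 0 tf := ⟨htP0 i, htPN i, htPmono i⟩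
  have hx : ContinuousOn x (Icc 0 tf) :=
    (continuousOn_const.add (intervalIntegral.continuousOn_primitive hInt)).congr hAC
  have hx' : MemLp x' 2 (volume.restrict (Ioc 0 tf)) :=
    ((memLp_two_iff_integrable_sq_norm hInt.aestronglyMeasurable).2 hL2).mono_measure
      (Measure.restrict_mono_set _ Ioc_subset_Icc_self)
  obtain ⟨hxζ, hϑ⟩ := tendsto_zero_and_of_tendsto_add_zero (fun i => by positivity)
    (fun i => norm_nonneg (ϑ i - θ)) hconv
  obtain ⟨hxW, hζ⟩ := tendsto_zero_and_of_tendsto_add_zero (fun i => Real.sqrt_nonneg _)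
    (fun i => norm_nonneg (ζ i - z0)) hxζ
  have hxh : TendstoUniformlyOn xh x atTop (Icc 0 tf) :=
    tendstoUniformlyOn_of_tendsto_w2Norm hx'
      (fun i => (hP i).memLp_two_of_piecewise_const (hdpc i)) hAC hxhAC hxW
  have hLip (i : ℕ) (s : ℝ) (hs : s ∈ Icc 0 tf) :
      LipschitzWith Lh.toNNReal fun w => h s (xh i s) w (ϑ i) :=
    LipschitzWith.of_dist_le' fun w w' => by
      simpa [dist_eq_norm] using hhLip _ (hϑS i) s hs (xh i s) (xh i s) w w'
  have hzha : Tendsto (fun i => zh i 0) atTop (𝓝 z0) := by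
    simpa only [hzh0] using tendsto_iff_norm_sub_tendsto_zero.2 hζ
  exact tendsto_iSup_norm_sub_of_tendstoUniformlyOn <| stmt12_general hP hmesh hhc hx hxh
    (tendsto_iff_norm_sub_tendsto_zero.2 hϑ) hLip hzhrec hzha hzc hz
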